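/- Let F = u • 1 + v • H + Σ_k u_k • γ^k + Σ_k v_k • (H * γ^k) + Σ_{p,q} w p q • (γ^p * γ^q) with w skew-symmetric (w p q = -w q p). Then F is d-skew-symmetric (Fᵀ * d = -(d * F)) if and only if u = 0, v = 0, and v_k = 0 for all k in {0,1,2,3}. -/

import Mathlib

/-!
For the spinor metric `H` is self-adjoint and the `γ^k` are skew-adjoint. As `H` anticommutes with
the `γ^k`, the products `H γ^k` are self-adjoint, while the antisymmetric combinations of the
`γ^p γ^q` are skew-adjoint. The metric is nondegenerate, so `F` is skew-adjoint precisely when its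
self-adjoint part `u·1 + v·H + Σ_k v_k H γ^k` vanishes. Multiplied by `H`, this part becomes
`v·1 + u·H + Σ_k v_k γ^k`, and `1` together with at least two pairwise anticommuting units is a
linearly independent family.
-/

open Matrix

noncomputable section

/-- The Dirac γ-matrices (upper index) in the chiral representation. -/
def γup : Fin 4 → Matrix (Fin 4) (Fin 4) ℂ :=
  ![!![0,0,1,0; 0,0,0,1; 1,0,0,0; 0,1,0,0],
    !![0,0,0,-1; 0,0,-1,0; 0,1,0,0; 1,0,0,0],
    !![0,0,0,Complex.I; 0,0,-Complex.I,0; 0,-Complex.I,0,0; Complex.I,0,0,0],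
    !![0,0,-1,0; 0,0,0,1; 1,0,0,0; 0,-1,0,0]]

/-- The lowered-index Dirac γ-matrices: γ₀ = γ⁰, γⱼ = -γʲ for j = 1,2,3. -/
def γdn : Fin 4 → Matrix (Fin 4) (Fin 4) ℂ :=
  ![γup 0, -γup 1, -γup 2, -γup 3]

/-- The chirality operator H = diag(1,1,-1,-1). -/
def Hc : Matrix (Fin 4) (Fin 4) ℂ :=
  !![1,0,0,0; 0,1,0,0; 0,0,-1,0; 0,0,0,-1]

/-- Components of the Minkowski metric of signature (+,-,-,-). -/
def η (p q : Fin 4) : ℂ := if p = q then (if p = 0 then 1 else -1) else 0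

/-- The Kronecker delta. -/
def δ (p q : Fin 4) : ℂ := if p = q then 1 else 0

/-- The Levi-Civita symbol: the sign of the permutation (p,q,r,s) of (0,1,2,3),
and 0 if any two indices coincide. -/
def ε (p q r s : Fin 4) : ℂ :=
  ((∏ i : Fin 4, ∏ j : Fin 4,
      if i < j then Int.sign ((![p,q,r,s] j : ℤ) - (![p,q,r,s] i : ℤ)) else 1 : ℤ) : ℂ)

/-- The spinor metric matrix. -/
def dm : Matrix (Fin 4) (Fin 4) ℂ := !![0,1,0,0; -1,0,0,0; 0,0,0,-1; 0,0,1,0]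

/-- The Dirac form matrix. -/
def Dm : Matrix (Fin 4) (Fin 4) ℂ := !![0,0,1,0; 0,0,0,1; 1,0,0,0; 0,1,0,0]

end

/-- The expansion F = u·1 + v·H + Σ_k u_k γ^k + Σ_k v_k H γ^k + Σ_{p,q} w_{pq} γ^p γ^q. -/
noncomputable def diracExpand (u v : ℂ) (uv vv : Fin 4 → ℂ) (w : Fin 4 → Fin 4 → ℂ) :
    Matrix (Fin 4) (Fin 4) ℂ :=
  u • (1 : Matrix (Fin 4) (Fin 4) ℂ) + v • Hc + (∑ k : Fin 4, uv k • γup k)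
    + (∑ k : Fin 4, vv k • (Hc * γup k))
    + ∑ p : Fin 4, ∑ q : Fin 4, w p q • (γup p * γup q)

section Anticommute

theorem mul_linearCombination_add_linearCombination_mul_of_anticommute
    {ι R A : Type*} [CommSemiring R] [Ring A] [Algebra R A] {e : ι → A}
    (he : Pairwise fun i j ↦ e i * e j = -(e j * e i)) (c : ι →₀ R) (j : ι) :
    e j * Finsupp.linearCombination R e c + Finsupp.linearCombination R e c * e j
      = (2 * c j) • (e j * e j) := by
  induction c using Finsupp.induction_linear with
  | zero => simp
  | add f g hf hg =>
    simp only [map_add, mul_add, add_mul, Finsupp.add_apply, add_smul, ← hf, ← hg]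
    abel
  | single i a =>
    obtain rfl | hij := eq_or_ne i j
    · simp [two_mul, add_smul]
    · simp [he hij, hij]

variable {ι K A : Type*} [Field K] [NeZero (2 : K)] [Ring A] [Algebra K A] {e : ι → A}

theorem linearIndependent_of_anticommute
    (he : Pairwise fun i j ↦ e i * e j = -(e j * e i)) (hsq : ∀ i, e i * e i ≠ 0) :
    LinearIndependent K e := by
  refine linearIndependent_iff.2 fun c hc ↦ Finsupp.ext fun j ↦ ?_
  have h := mul_linearCombination_add_linearCombination_mul_of_anticommute he c j
  rw [hc, mul_zero, zero_mul, add_zero, eq_comm, smul_eq_zero_iff_left (hsq j)] at h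
  simpa [two_ne_zero] using h

theorem one_notMem_span_of_anticommute [Nontrivial A] [Nontrivial ι]
    (he : Pairwise fun i j ↦ e i * e j = -(e j * e i)) (hu : ∀ i, IsUnit (e i)) :
    (1 : A) ∉ Submodule.span K (Set.range e) := by
  rw [Finsupp.mem_span_range_iff_exists_finsupp]
  rintro ⟨c, hc : Finsupp.linearCombination K e c = 1⟩
  obtain ⟨i, j, hij⟩ := exists_pair_ne ι
  -- Anticommuting `1 = ∑ c k • e k` with `e i` shows that `e i` is a scalar, hence central; but it
  -- anticommutes with `e j`.
  have one_eq_smul : 1 = c i • e i := by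
    have h := mul_linearCombination_add_linearCombination_mul_of_anticommute he c i
    rw [hc, mul_one, one_mul, ← two_smul K, mul_smul] at h
    have h' := smul_right_injective A (two_ne_zero' K) h
    rw [← mul_smul_comm] at h'
    exact (hu i).mul_left_cancel (by rwa [mul_one])
  have hci : c i ≠ 0 := by
    intro h
    simp [h] at one_eq_smul
  have comm : e i * e j = e j * e i := by
    apply smul_right_injective A hci
    change c i • (e i * e j) = c i • (e j * e i)
    rw [← smul_mul_assoc, ← mul_smul_comm, ← one_eq_smul, one_mul, mul_one]
  have two_smul_eq_zero : (2 : K) • (e i * e j) = 0 := by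
    rw [two_smul]
    nth_rewrite 1 [he hij]
    rw [comm, neg_add_cancel]
  exact ((hu i).mul (hu j)).ne_zero
    ((smul_eq_zero_iff_right (two_ne_zero' K)).1 two_smul_eq_zero)

theorem linearIndependent_option_one_of_anticommute [Nontrivial A] [Nontrivial ι]
    (he : Pairwise fun i j ↦ e i * e j = -(e j * e i)) (hu : ∀ i, IsUnit (e i)) :
    LinearIndependent K fun o : Option ι ↦ o.elim 1 e :=
  linearIndependent_option.2
    ⟨linearIndependent_of_anticommute he fun i ↦ ((hu i).mul (hu i)).ne_zero,
      one_notMem_span_of_anticommute he hu⟩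

end Anticommute

section AdjointPair

variable {R l m n : Type*} [CommRing R] [Fintype l] [Fintype m] [Fintype n]

theorem isAdjointPair_mul {J₁ : Matrix l l R} {J₂ : Matrix m m R} {J₃ : Matrix n n R}
    {A : Matrix n m R} {A' : Matrix m n R} {B : Matrix m l R} {B' : Matrix l m R}
    (hA : J₂.IsAdjointPair J₃ A A') (hB : J₁.IsAdjointPair J₂ B B') :
    J₁.IsAdjointPair J₃ (A * B) (B' * A') := by
  unfold Matrix.IsAdjointPair at *
  rw [transpose_mul, Matrix.mul_assoc, hA, ← Matrix.mul_assoc, hB, Matrix.mul_assoc]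

variable {J : Matrix n n R}

theorem isSelfAdjoint_mul_of_anticommute {A B : Matrix n n R} (hA : J.IsSelfAdjoint A)
    (hB : J.IsSkewAdjoint B) (hBA : B * A = -(A * B)) : J.IsSelfAdjoint (A * B) := by
  simpa [hBA, Matrix.IsSelfAdjoint] using isAdjointPair_mul hA hB

theorem isSkewAdjoint_sum_smul_mul {ι : Type*} [Fintype ι] {e : ι → Matrix n n R}
    (he : ∀ i, J.IsSkewAdjoint (e i)) {w : ι → ι → R} (hw : ∀ i j, w i j = -w j i) :
    J.IsSkewAdjoint (∑ i, ∑ j, w i j • (e i * e j)) := by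
  have adj (i j : ι) : (e i * e j)ᵀ * J = J * (e j * e i) :=
    (isAdjointPair_mul (he i) (he j)).trans (by rw [neg_mul_neg])
  calc (∑ i, ∑ j, w i j • (e i * e j))ᵀ * J
      = ∑ i, ∑ j, w i j • (J * (e j * e i)) := by
        simp only [transpose_sum, transpose_smul, Matrix.sum_mul, Matrix.smul_mul, adj]
    _ = ∑ j, ∑ i, w i j • (J * (e j * e i)) := Finset.sum_comm
    _ = ∑ j, ∑ i, -(w j i • (J * (e j * e i))) := by
        simp_rw [← neg_smul, ← hw]
    _ = J * -∑ j, ∑ i, w j i • (e j * e i) := by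
        simp only [Matrix.mul_neg, Matrix.mul_sum, Matrix.mul_smul, Finset.sum_neg_distrib]

theorem disjoint_selfAdjoint_skewAdjoint [DecidableEq n] [NoZeroDivisors R] [NeZero (2 : R)]
    (hJ : IsLeftRegular J) :
    Disjoint (selfAdjointMatricesSubmodule J) (skewAdjointMatricesSubmodule J) := by
  refine Submodule.disjoint_def.2 fun A hself hskew ↦ ?_
  rw [mem_selfAdjointMatricesSubmodule] at hself
  rw [mem_skewAdjointMatricesSubmodule] at hskew
  have hA : A = -A := hJ (hself.symm.trans hskew)
  ext i j
  have hij : 2 * A i j = 0 := by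
    rw [two_mul, ← eq_neg_iff_add_eq_zero]
    exact congrFun₂ hA i j
  exact (mul_eq_zero.1 hij).resolve_left two_ne_zero

theorem isSkewAdjoint_add_iff [NoZeroDivisors R] [NeZero (2 : R)] (hJ : IsLeftRegular J)
    {S T : Matrix n n R} (hS : J.IsSelfAdjoint S) (hT : J.IsSkewAdjoint T) :
    J.IsSkewAdjoint (S + T) ↔ S = 0 := by
  classical
  rw [← mem_skewAdjointMatricesSubmodule] at hT ⊢
  rw [← mem_selfAdjointMatricesSubmodule] at hS
  rw [Submodule.add_mem_iff_left _ hT]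
  exact ⟨Submodule.disjoint_def.1 (disjoint_selfAdjoint_skewAdjoint hJ) S hS,
    fun h ↦ h ▸ Submodule.zero_mem _⟩

end AdjointPair

theorem γup_mul_self (p : Fin 4) : γup p * γup p = η p p • 1 := by
  ext i j
  fin_cases p <;> fin_cases i <;> fin_cases j <;> simp [γup, η]

theorem isUnit_γup (p : Fin 4) : IsUnit (γup p) := by
  have hη : η p p ≠ 0 := by fin_cases p <;> simp [η]
  have hsq : IsUnit (γup p * γup p) := γup_mul_self p ▸ isUnit_one.smul (Units.mk0 _ hη)
  exact ((Commute.refl _).isUnit_mul_iff.1 hsq).1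

theorem γup_anticommute : Pairwise fun p q ↦ γup p * γup q = -(γup q * γup p) := by
  intro p q hpq
  fin_cases p <;> fin_cases q <;> first | exact absurd rfl hpq | simp [γup]

theorem Hc_mul_self : Hc * Hc = 1 := by
  ext i j
  fin_cases i <;> fin_cases j <;> simp [Hc]

theorem isUnit_Hc : IsUnit Hc :=
  IsUnit.of_mul_eq_one Hc Hc_mul_self

theorem γup_mul_Hc (k : Fin 4) : γup k * Hc = -(Hc * γup k) := by
  fin_cases k <;> simp [γup, Hc]

/-- The five anticommuting Dirac matrices: the chirality operator `Hc`, which is `γ⁵ = iγ⁰γ¹γ²γ³` up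
to sign, at `none`, and `γ^k` at `some k`. -/
noncomputable def chiralγ (o : Option (Fin 4)) : Matrix (Fin 4) (Fin 4) ℂ :=
  o.elim Hc γup

theorem chiralγ_anticommute :
    Pairwise fun p q ↦ chiralγ p * chiralγ q = -(chiralγ q * chiralγ p) := by
  rintro (_ | p) (_ | q) hpq
  · exact absurd rfl hpq
  · simp [chiralγ, γup_mul_Hc]
  · exact γup_mul_Hc p
  · exact γup_anticommute (by simpa using hpq)

theorem isUnit_chiralγ : ∀ o, IsUnit (chiralγ o)
  | none => isUnit_Hc
  | some k => isUnit_γup k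

theorem isUnit_dm : IsUnit dm := by
  have hsq : dm * -dm = 1 := by
    ext i j
    fin_cases i <;> fin_cases j <;> simp [dm]
  exact IsUnit.of_mul_eq_one _ hsq

theorem isSelfAdjoint_Hc : dm.IsSelfAdjoint Hc := by
  ext i j
  fin_cases i <;> fin_cases j <;> simp [Hc, dm, Matrix.mul_apply, Fin.sum_univ_four]

theorem isSkewAdjoint_γup (k : Fin 4) : dm.IsSkewAdjoint (γup k) := by
  ext i j
  fin_cases k <;> fin_cases i <;> fin_cases j <;>
    simp [γup, dm, Matrix.mul_apply, Fin.sum_univ_four]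

/-- The part `u·1 + v·H + Σ_k v_k H γ^k` of `diracExpand`, which is self-adjoint for the spinor
metric. -/
noncomputable def diracSelfAdjointPart (u v : ℂ) (vv : Fin 4 → ℂ) : Matrix (Fin 4) (Fin 4) ℂ :=
  u • 1 + v • Hc + ∑ k, vv k • (Hc * γup k)

/-- The part `Σ_k u_k γ^k + Σ_{p,q} w_{pq} γ^p γ^q` of `diracExpand`, which is skew-adjoint for the
spinor metric when `w` is antisymmetric. -/
noncomputable def diracSkewAdjointPart (uv : Fin 4 → ℂ) (w : Fin 4 → Fin 4 → ℂ) :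
    Matrix (Fin 4) (Fin 4) ℂ :=
  ∑ k, uv k • γup k + ∑ p, ∑ q, w p q • (γup p * γup q)

section Parts

variable (u v : ℂ) (uv vv : Fin 4 → ℂ) (w : Fin 4 → Fin 4 → ℂ)

theorem diracExpand_eq_selfAdjointPart_add_skewAdjointPart :
    diracExpand u v uv vv w = diracSelfAdjointPart u v vv + diracSkewAdjointPart uv w := by
  unfold diracExpand diracSelfAdjointPart diracSkewAdjointPart
  abel

theorem isSelfAdjoint_diracSelfAdjointPart : dm.IsSelfAdjoint (diracSelfAdjointPart u v vv) := by
  have one_mem : 1 ∈ selfAdjointMatricesSubmodule dm := by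
    simp [Matrix.IsSelfAdjoint, Matrix.IsAdjointPair]
  have Hc_mem : Hc ∈ selfAdjointMatricesSubmodule dm :=
    (mem_selfAdjointMatricesSubmodule _ _).2 isSelfAdjoint_Hc
  have Hc_mul_γup_mem (k : Fin 4) : Hc * γup k ∈ selfAdjointMatricesSubmodule dm :=
    (mem_selfAdjointMatricesSubmodule _ _).2 <|
      isSelfAdjoint_mul_of_anticommute isSelfAdjoint_Hc (isSkewAdjoint_γup k) (γup_mul_Hc k)
  rw [← mem_selfAdjointMatricesSubmodule]
  exact add_mem (add_mem (Submodule.smul_mem _ u one_mem) (Submodule.smul_mem _ v Hc_mem))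
    (sum_mem fun k _ ↦ Submodule.smul_mem _ _ (Hc_mul_γup_mem k))

variable {w} in
theorem isSkewAdjoint_diracSkewAdjointPart (hw : ∀ p q, w p q = -w q p) :
    dm.IsSkewAdjoint (diracSkewAdjointPart uv w) := by
  rw [← mem_skewAdjointMatricesSubmodule]
  refine add_mem (sum_mem fun k _ ↦ Submodule.smul_mem _ _ ?_) ?_
  · exact (mem_skewAdjointMatricesSubmodule _ _).2 (isSkewAdjoint_γup k)
  · exact (mem_skewAdjointMatricesSubmodule _ _).2
      (isSkewAdjoint_sum_smul_mul isSkewAdjoint_γup hw)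

theorem diracSelfAdjointPart_eq_Hc_mul :
    diracSelfAdjointPart u v vv = Hc * (v • 1 + u • Hc + ∑ k, vv k • γup k) := by
  simp only [diracSelfAdjointPart, Matrix.mul_add, Matrix.mul_smul, Matrix.mul_sum, Matrix.mul_one,
    Hc_mul_self, add_comm (u • (1 : Matrix (Fin 4) (Fin 4) ℂ))]

variable {u v vv} in
theorem diracSelfAdjointPart_eq_zero_iff :
    diracSelfAdjointPart u v vv = 0 ↔ u = 0 ∧ v = 0 ∧ ∀ k, vv k = 0 := by
  constructor
  · intro h
    rw [diracSelfAdjointPart_eq_Hc_mul, isUnit_Hc.mul_right_eq_zero] at h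
    have hind : LinearIndependent ℂ fun o : Option (Option (Fin 4)) ↦ o.elim 1 chiralγ :=
      linearIndependent_option_one_of_anticommute chiralγ_anticommute isUnit_chiralγ
    have hcoeff := Fintype.linearIndependent_iff.1 hind (fun o ↦ o.elim v fun o ↦ o.elim u vv)
      (by simpa [Fintype.sum_option, chiralγ, add_assoc] using h)
    exact ⟨hcoeff (some none), hcoeff none, fun k ↦ hcoeff (some (some k))⟩
  · rintro ⟨rfl, rfl, hvv⟩
    simp [diracSelfAdjointPart, hvv]

end Parts

/-- A spin-operator is skew-symmetric w.r.t. the spinor metric d iff the coefficients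
u, v and v_k of its expansion vanish. -/
theorem dirac_expansion_d_skew_symmetric
    (u v : ℂ) (uv vv : Fin 4 → ℂ) (w : Fin 4 → Fin 4 → ℂ)
    (hw : ∀ p q, w p q = -w q p)
    (F : Matrix (Fin 4) (Fin 4) ℂ) (hF : F = diracExpand u v uv vv w) :
    Fᵀ * dm = -(dm * F) ↔ (u = 0 ∧ v = 0 ∧ ∀ k : Fin 4, vv k = 0) := by
  subst hF
  calc (diracExpand u v uv vv w)ᵀ * dm = -(dm * diracExpand u v uv vv w)
      ↔ dm.IsSkewAdjoint (diracExpand u v uv vv w) := by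
        rw [Matrix.IsSkewAdjoint, Matrix.IsAdjointPair, Matrix.mul_neg]
    _ ↔ dm.IsSkewAdjoint (diracSelfAdjointPart u v vv + diracSkewAdjointPart uv w) := by
        rw [diracExpand_eq_selfAdjointPart_add_skewAdjointPart]
    _ ↔ diracSelfAdjointPart u v vv = 0 :=
        isSkewAdjoint_add_iff isUnit_dm.isRegular.left (isSelfAdjoint_diracSelfAdjointPart u v vv)
          (isSkewAdjoint_diracSkewAdjointPart uv hw)
    _ ↔ u = 0 ∧ v = 0 ∧ ∀ k : Fin 4, vv k = 0 := diracSelfAdjointPart_eq_zero_iff
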